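/- The automorphism group of the group C4 ⋊ C4 (the group <2,2|4;2> with presentation a^4 = b^4 = 1, a^b = a^{-1}) is isomorphic to the wreath product (C2 × C2) wr C2, a group of order 32. -/

import Mathlib

/-!
Write `G = C4 ⋊ C4` with generators `a`, `b`, where `b` inverts `a`. Its centre is
`Z = {1, a², b², a²b²} ≅ C2 × C2`, and `Z` is also the Frattini subgroup, so every homomorphism
`h : G → Z` yields an automorphism `g ↦ g * h g`, and these compose by multiplying the `h`'s. They
form a normal subgroup `Hom(G, Z) ≅ Z × Z` of `Aut G`, of order 16. The coordinates are chosen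
so that `(z, w)` stands for the automorphism `a ↦ a z w`, `b ↦ b w` (`centralAut`).

The automorphism `τ : a ↦ a⁻¹, b ↦ a b` (`tau`) is an involution. It fixes `Z` pointwise and sends
`b` to `a b` modulo `Z`, so conjugation by it interchanges `a ↦ a z, b ↦ b` and
`a ↦ a z, b ↦ b z`, i.e. swaps the two coordinates. This gives a homomorphism
`Z wr C2 → Aut G` (`wreathToAut`).

An automorphism is determined by the images `x`, `y` of `a`, `b`. These satisfy `y x = x⁻¹ y` and
`x² ≠ 1`; exactly 32 pairs do, and each comes from exactly one element of the wreath
product (`exists_wreath_of_pair`, `eq_one_of_fix_gen`), so the homomorphism is bijective.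
-/

/-- Monoid hom from `Multiplicative (ZMod n)` sending the canonical generator to `σ`,
given that `σ ^ n = 1`. -/
def zmodHom {M : Type*} [Monoid M] (n : ℕ) [NeZero n] (σ : M) (h : σ ^ n = 1) :
    Multiplicative (ZMod n) →* M where
  toFun c := σ ^ (Multiplicative.toAdd c).val
  map_one' := by simp
  map_mul' a b := by
    simp only [toAdd_mul]
    rw [ZMod.val_add, ← pow_eq_pow_mod _ h, pow_add]

lemma inv_pow_four (G : Type*) [CommGroup G] : MulEquiv.inv G ^ 4 = 1 := by
  have h2 : MulEquiv.inv G ^ 2 = 1 := by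
    rw [sq]; exact MulEquiv.ext fun x => inv_inv x
  calc MulEquiv.inv G ^ 4 = (MulEquiv.inv G ^ 2) ^ 2 := by rw [← pow_mul]
  _ = 1 := by rw [h2, one_pow]

/-- The group `C4 ⋊ C4` in which the chosen generator of the acting `C4` acts on the
normal `C4` by inversion. -/
abbrev C4rtimesC4 : Type :=
  SemidirectProduct (Multiplicative (ZMod 4)) (Multiplicative (ZMod 4))
    (zmodHom 4 (MulEquiv.inv (Multiplicative (ZMod 4))) (inv_pow_four _))

/-- The coordinate-swap automorphism of `G × G`. -/
def swapAut (G : Type*) [Group G] : MulAut (G × G) :=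
  (MulEquiv.prodComm : G × G ≃* G × G)

lemma swapAut_sq (G : Type*) [Group G] : swapAut G ^ 2 = 1 := by
  rw [sq]
  exact MulEquiv.ext fun x => Prod.swap_swap x

/-- The wreath product `G wr C2`: the semidirect product `(G × G) ⋊ C2` where the
nontrivial element of `C2` swaps the two factors. -/
abbrev wreathC2 (G : Type*) [Group G] : Type _ :=
  SemidirectProduct (G × G) (Multiplicative (ZMod 2)) (zmodHom 2 (swapAut G) (swapAut_sq G))

/-- The Klein four-group `C2 × C2`, used as coordinates for the centre of `C4 ⋊ C4`. -/
abbrev KleinFour : Type := Multiplicative (ZMod 2) × Multiplicative (ZMod 2)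

/-- The generator `a` of the normal factor of `C4 ⋊ C4`. -/
def genA : C4rtimesC4 := ⟨Multiplicative.ofAdd 1, 1⟩

/-- The generator `b` of the acting factor of `C4 ⋊ C4`. -/
def genB : C4rtimesC4 := ⟨1, Multiplicative.ofAdd 1⟩

/-- The element `a ^ (2 s) * b ^ (2 t)` of the centre of `C4 ⋊ C4`, for `z = (s, t)`. -/
def centralElt (z : KleinFour) : C4rtimesC4 :=
  ⟨Multiplicative.ofAdd (2 * (z.1.toAdd.val : ZMod 4)),
    Multiplicative.ofAdd (2 * (z.2.toAdd.val : ZMod 4))⟩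

instance : DecidableEq C4rtimesC4 := fun x y =>
  decidable_of_iff (x.left = y.left ∧ x.right = y.right) SemidirectProduct.ext_iff.symm

instance : Fintype C4rtimesC4 := Fintype.ofEquiv _ SemidirectProduct.equivProd.symm

lemma eq_genA_pow_mul_genB_pow : ∀ g : C4rtimesC4,
    g = genA ^ g.left.toAdd.val * genB ^ g.right.toAdd.val := by
  decide +kernel

lemma hom_ext_gen {M : Type*} [Monoid M] {f f' : C4rtimesC4 →* M} (hA : f genA = f' genA)
    (hB : f genB = f' genB) : f = f' := by
  ext1 g
  rw [eq_genA_pow_mul_genB_pow g]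
  simp only [map_mul, map_pow, hA, hB]

/-- The universal property of the presentation `a⁴ = b⁴ = 1`, `b a b⁻¹ = a⁻¹`: the homomorphism
sending `a` to `x` and `b` to `y`. -/
def homOfGen {M : Type*} [Group M] (x y : M) (hx : x ^ 4 = 1) (hy : y ^ 4 = 1)
    (hxy : y * x * y⁻¹ = x⁻¹) : C4rtimesC4 →* M :=
  SemidirectProduct.lift (zmodHom 4 x hx) (zmodHom 4 y hy) (by
    have conj_val : ∀ c, y * zmodHom 4 x hx c * y⁻¹ = (zmodHom 4 x hx c)⁻¹ := fun c => by
      change y * x ^ _ * y⁻¹ = (x ^ _)⁻¹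
      rw [← conj_pow, hxy, inv_pow]
    refine fun c => MonoidHom.ext fun d => ?_
    change zmodHom 4 x hx ((MulEquiv.inv (Multiplicative (ZMod 4)) ^ c.toAdd.val) d) =
      y ^ c.toAdd.val * zmodHom 4 x hx d * (y ^ c.toAdd.val)⁻¹
    generalize c.toAdd.val = k
    induction k generalizing d with
    | zero => simp
    | succ k ih =>
      rw [pow_succ, MulAut.mul_apply, ih, MulEquiv.inv_apply, map_inv, ← conj_val, pow_succ]
      group)

/-- The endomorphism `a ↦ a z w`, `b ↦ b w` attached to `p = (z, w)`. -/
def centralEnd (p : KleinFour × KleinFour) : C4rtimesC4 →* C4rtimesC4 :=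
  homOfGen (genA * centralElt (p.1 * p.2)) (genB * centralElt p.2)
    (by revert p; decide +kernel) (by revert p; decide +kernel) (by revert p; decide +kernel)

lemma centralEnd_mul (p q : KleinFour × KleinFour) :
    centralEnd (p * q) = (centralEnd p).comp (centralEnd q) := by
  apply hom_ext_gen <;> revert p q <;> decide +kernel

lemma centralEnd_one : centralEnd 1 = MonoidHom.id _ := by
  apply hom_ext_gen <;> decide +kernel

/-- The homomorphism from `Z × Z` onto the central automorphisms, those of the form
`g ↦ g * h g` with `h` a homomorphism into the centre. -/
def centralAut : KleinFour × KleinFour →* MulAut C4rtimesC4 where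
  toFun p := (centralEnd p).toMulEquiv (centralEnd p⁻¹)
    (by rw [← centralEnd_mul, inv_mul_cancel, centralEnd_one])
    (by rw [← centralEnd_mul, mul_inv_cancel, centralEnd_one])
  map_one' := MulEquiv.ext fun g => DFunLike.congr_fun centralEnd_one g
  map_mul' p q := MulEquiv.ext fun g => DFunLike.congr_fun (centralEnd_mul p q) g

/-- The endomorphism `a ↦ a⁻¹`, `b ↦ a b`. -/
def tauEnd : C4rtimesC4 →* C4rtimesC4 :=
  homOfGen genA⁻¹ (genA * genB) (by decide +kernel) (by decide +kernel) (by decide +kernel)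

lemma tauEnd_comp_tauEnd : tauEnd.comp tauEnd = MonoidHom.id _ := by
  apply hom_ext_gen <;> decide +kernel

/-- The involution `τ : a ↦ a⁻¹, b ↦ a b`, which conjugates the automorphism `(z, w)` of
`centralAut` to `(w, z)`. -/
def tau : MulAut C4rtimesC4 := tauEnd.toMulEquiv tauEnd tauEnd_comp_tauEnd tauEnd_comp_tauEnd

lemma tau_sq : tau ^ 2 = 1 := by
  rw [sq]
  exact MulEquiv.ext fun g => DFunLike.congr_fun tauEnd_comp_tauEnd g

lemma tau_mul_centralAut (p : KleinFour × KleinFour) :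
    tau * centralAut p = centralAut p.swap * tau := by
  have h : tauEnd.comp (centralEnd p) = (centralEnd p.swap).comp tauEnd := by
    apply hom_ext_gen <;> revert p <;> decide +kernel
  exact MulEquiv.ext fun g => DFunLike.congr_fun h g

/-- The homomorphism `Z wr C2 → Aut G` given by the central automorphisms on the base group
and by `τ` on the top group. -/
def wreathToAut : wreathC2 KleinFour →* MulAut C4rtimesC4 :=
  SemidirectProduct.lift centralAut (zmodHom 2 tau tau_sq) (by
    refine fun c => MonoidHom.ext fun p => ?_
    change centralAut ((swapAut KleinFour ^ c.toAdd.val) p) =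
      tau ^ c.toAdd.val * centralAut p * (tau ^ c.toAdd.val)⁻¹
    generalize c.toAdd.val = k
    induction k generalizing p with
    | zero => simp
    | succ k ih =>
      have h : centralAut (swapAut KleinFour p) = tau * centralAut p * tau⁻¹ :=
        eq_mul_inv_of_mul_eq (tau_mul_centralAut p).symm
      rw [pow_succ, MulAut.mul_apply, ih, h, pow_succ]
      group)

/-- An element of the wreath product acting trivially on both generators is trivial. -/
lemma eq_one_of_fix_gen : ∀ (p : KleinFour × KleinFour) (c : Multiplicative (ZMod 2)),
    wreathToAut ⟨p, c⟩ genA = genA → wreathToAut ⟨p, c⟩ genB = genB → p = 1 ∧ c = 1 := by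
  decide +kernel

/-- Every pair satisfying the constraints `y x y⁻¹ = x⁻¹`, `x² ≠ 1`, which an automorphism imposes
on the images of `a` and `b`, is the image of `(a, b)` under an element of the wreath product. -/
lemma exists_wreath_of_pair : ∀ x y : C4rtimesC4, y * x * y⁻¹ = x⁻¹ → x ^ 2 ≠ 1 →
    ∃ (p : KleinFour × KleinFour) (c : Multiplicative (ZMod 2)),
      wreathToAut ⟨p, c⟩ genA = x ∧ wreathToAut ⟨p, c⟩ genB = y := by
  decide +kernel

lemma wreathToAut_injective : Function.Injective wreathToAut := by
  rw [injective_iff_map_eq_one]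
  rintro ⟨p, c⟩ h
  obtain ⟨rfl, rfl⟩ := eq_one_of_fix_gen p c (by rw [h]; rfl) (by rw [h]; rfl)
  rfl

lemma wreathToAut_surjective : Function.Surjective wreathToAut := by
  intro f
  have hconj : genB * genA * genB⁻¹ = genA⁻¹ := by decide +kernel
  have hsq : genA ^ 2 ≠ 1 := by decide +kernel
  obtain ⟨p, c, hA, hB⟩ := exists_wreath_of_pair (f genA) (f genB)
    (by rw [← map_mul, ← map_inv, ← map_mul, hconj, map_inv])
    (by rwa [← map_pow, ne_eq, map_eq_one_iff f f.injective])
  have h : (wreathToAut ⟨p, c⟩).toMonoidHom = f.toMonoidHom := hom_ext_gen hA hB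
  exact ⟨⟨p, c⟩, MulEquiv.ext fun g => DFunLike.congr_fun h g⟩

/-- The automorphism group of `C4 ⋊ C4` (the group `<2,2|4;2>`) is isomorphic to the
wreath product `(C2 × C2) wr C2` of order 32. -/
theorem aut_C4_rtimes_C4 :
    Nonempty (MulAut C4rtimesC4 ≃*
      wreathC2 (Multiplicative (ZMod 2) × Multiplicative (ZMod 2))) := by
  exact ⟨(MulEquiv.ofBijective wreathToAut
    ⟨wreathToAut_injective, wreathToAut_surjective⟩).symm⟩
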